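/- arXiv:1108.2913 — 3 statements merged into one kernel-verified Lean document; each statement's English description precedes it below -/
import Mathlib

section
/- Let T and X be measurable spaces, let 𝕄 be a finite signed measure on T, and let m : T → (finite signed measures on X) be a family such that for every measurable E ⊆ X the map t ↦ (m t)(E) is measurable, and such that there is γ > 0 with ‖m t‖ ≤ γ for all t ∈ T. Then the set function κ defined on measurable sets E ⊆ X by κ(E) = ∫_T (m t)(E) d𝕄(t) is a finite signed measure on X: κ(∅) = 0 and κ is countably additive. -/
open MeasureTheory

/-- The integral of a real-valued function with respect to a finite signed measure,
defined via the Jordan decomposition: `∫ f dμ = ∫ f dμ⁺ − ∫ f dμ⁻`. -/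
noncomputable def sintegral {X : Type*} [MeasurableSpace X] (μ : SignedMeasure X) (f : X → ℝ) : ℝ :=
  (∫ x, f x ∂μ.toJordanDecomposition.posPart) - ∫ x, f x ∂μ.toJordanDecomposition.negPart

/-- A function is integrable with respect to a finite signed measure `μ` if it is
integrable with respect to the total variation measure `|μ| = μ⁺ + μ⁻`. -/
def SIntegrable {X : Type*} [MeasurableSpace X] (μ : SignedMeasure X) (f : X → ℝ) : Prop :=
  Integrable f μ.totalVariation

/-- The total variation norm of a finite signed measure: `‖μ‖ = |μ|(X)`. -/
noncomputable def tvNorm {X : Type*} [MeasurableSpace X] (μ : SignedMeasure X) : ℝ :=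
  (μ.totalVariation Set.univ).toReal

theorem aux_bound {X : Type*} [MeasurableSpace X] (s : SignedMeasure X) (i : Set X) :
    ‖s i‖ ≤ tvNorm s := by
  have : IsFiniteMeasure s.totalVariation := by
    unfold SignedMeasure.totalVariation; infer_instance
  exact (s.norm_le_totalVariation i).trans (measureReal_mono (Set.subset_univ _))

theorem aux_hasSum {T X : Type*} [MeasurableSpace T] [MeasurableSpace X]
    (μ : Measure T) [IsFiniteMeasure μ] (m : T → SignedMeasure X)
    (hmeas : ∀ E : Set X, MeasurableSet E → Measurable fun t => m t E)
    (γ : ℝ) (hbound : ∀ t, tvNorm (m t) ≤ γ)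
    (E : ℕ → Set X) (hE : ∀ n, MeasurableSet (E n))
    (hd : Pairwise fun i j => Disjoint (E i) (E j)) :
    HasSum (fun n => ∫ t, m t (E n) ∂μ) (∫ t, m t (⋃ n, E n) ∂μ) := by
  have hint : ∀ n, Integrable (fun t => m t (E n)) μ := fun n =>
    Integrable.of_bound (hmeas _ (hE n)).aestronglyMeasurable γ
      (ae_of_all _ fun t => (aux_bound _ _).trans (hbound t))
  have key : ∀ (s : Finset ℕ) t, ∑ n ∈ s, m t (E n) = m t (⋃ n ∈ s, E n) := by
    intro s t
    exact ((m t).of_biUnion_finset (fun i _ j _ hij => hd hij) (fun i _ => hE i)).symm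
  unfold HasSum
  simp_rw [← integral_finset_sum _ (fun n _ => hint n)]
  refine tendsto_integral_filter_of_dominated_convergence (fun _ => γ) ?_ ?_
    (integrable_const γ) ?_
  · exact Filter.Eventually.of_forall fun s =>
      (Finset.measurable_sum s fun n _ => hmeas _ (hE n)).aestronglyMeasurable
  · refine Filter.Eventually.of_forall fun s => ae_of_all _ fun t => ?_
    rw [key]
    exact (aux_bound _ _).trans (hbound t)
  · exact ae_of_all _ fun t => (m t).m_iUnion hE hd

/-- If `m : T → (signed measures on X)` has `t ↦ (m t)(E)` measurable for each
measurable `E` and `‖m t‖ ≤ γ` uniformly, then `E ↦ ∫_T (m t)(E) d𝕄(t)` is a finite signed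
measure: it vanishes on `∅` and is countably additive. -/
theorem stmt8 {T X : Type*} [MeasurableSpace T] [MeasurableSpace X]
    (𝕄 : SignedMeasure T) (m : T → SignedMeasure X)
    (hmeas : ∀ E : Set X, MeasurableSet E → Measurable fun t => m t E)
    (γ : ℝ) (hγ : 0 < γ) (hbound : ∀ t, tvNorm (m t) ≤ γ) :
    (sintegral 𝕄 (fun t => m t (∅ : Set X)) = 0) ∧
    (∀ E : ℕ → Set X, (∀ n, MeasurableSet (E n)) →
      (Pairwise fun i j => Disjoint (E i) (E j)) →
      HasSum (fun n => sintegral 𝕄 fun t => m t (E n))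
        (sintegral 𝕄 fun t => m t (⋃ n, E n))) := by
  refine ⟨by simp [sintegral], fun E hE hd => ?_⟩
  exact (aux_hasSum _ m hmeas γ hbound E hE hd).sub (aux_hasSum _ m hmeas γ hbound E hE hd)
end

section
/- Let T and X be measurable spaces, 𝕄 a finite signed measure on T, and m : T → (finite signed measures on X) a family such that for every measurable E ⊆ X the map t ↦ (m t)(E) is measurable. Suppose there are a subset B ⊆ X and constants γ, β > 0 such that each m t is supported by B with ‖m t‖ ≤ γ, and let f : X → ℝ be measurable with |f(x)| ≤ β for all x ∈ B. Let κ be the finite signed measure on X defined by κ(E) = ∫_T (m t)(E) d𝕄(t). Then the function t ↦ ∫ f d(m t) is measurable and 𝕄-integrable, and ∫_T (∫_X f d(m t)) d𝕄(t) = ∫_X f dκ. -/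
open MeasureTheory

open Filter Topology

lemma tvNorm_eq_aux {X : Type*} [MeasurableSpace X] (μ : SignedMeasure X) :
    tvNorm μ = μ.toJordanDecomposition.posPart.real Set.univ
      + μ.toJordanDecomposition.negPart.real Set.univ := by
  unfold tvNorm SignedMeasure.totalVariation
  rw [Measure.add_apply, ENNReal.toReal_add (measure_ne_top _ _) (measure_ne_top _ _)]
  rfl

lemma abs_apply_le_aux {X : Type*} [MeasurableSpace X] (μ : SignedMeasure X) {E : Set X}
    (hE : MeasurableSet E) : |μ E| ≤ tvNorm μ := by
  rw [tvNorm_eq_aux, μ.apply_eq_posPart_real_sub_negPart_real hE, abs_le]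
  have h1 : μ.toJordanDecomposition.posPart.real E
      ≤ μ.toJordanDecomposition.posPart.real Set.univ := measureReal_mono (Set.subset_univ _)
  have h2 : μ.toJordanDecomposition.negPart.real E
      ≤ μ.toJordanDecomposition.negPart.real Set.univ := measureReal_mono (Set.subset_univ _)
  have h3 : 0 ≤ μ.toJordanDecomposition.posPart.real E := measureReal_nonneg
  have h4 : 0 ≤ μ.toJordanDecomposition.negPart.real E := measureReal_nonneg
  constructor <;> linarith

lemma abs_sintegral_le_aux {X : Type*} [MeasurableSpace X] (μ : SignedMeasure X) {h : X → ℝ}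
    {c : ℝ} (hc : ∀ x, |h x| ≤ c) : |sintegral μ h| ≤ c * tvNorm μ := by
  rw [tvNorm_eq_aux, mul_add]
  have h1 := norm_integral_le_of_norm_le_const (μ := μ.toJordanDecomposition.posPart) (f := h)
    (C := c) (Eventually.of_forall hc)
  have h2 := norm_integral_le_of_norm_le_const (μ := μ.toJordanDecomposition.negPart) (f := h)
    (C := c) (Eventually.of_forall hc)
  exact (abs_sub _ _).trans (add_le_add h1 h2)

lemma tendsto_sintegral_aux {X : Type*} [MeasurableSpace X] (μ : SignedMeasure X)
    {F : ℕ → X → ℝ} {h : X → ℝ} {c : ℝ} (hF : ∀ n, Measurable (F n))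
    (hc : ∀ n x, |F n x| ≤ c) (hl : ∀ x, Tendsto (fun n => F n x) atTop (𝓝 (h x))) :
    Tendsto (fun n => sintegral μ (F n)) atTop (𝓝 (sintegral μ h)) := by
  unfold sintegral
  apply Tendsto.sub
  · exact tendsto_integral_of_dominated_convergence (fun _ => c)
      (fun n => (hF n).aestronglyMeasurable) (integrable_const _)
      (fun n => Eventually.of_forall (hc n)) (Eventually.of_forall hl)
  · exact tendsto_integral_of_dominated_convergence (fun _ => c)
      (fun n => (hF n).aestronglyMeasurable) (integrable_const _)
      (fun n => Eventually.of_forall (hc n)) (Eventually.of_forall hl)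

lemma integrable_bdd_aux {X : Type*} [MeasurableSpace X] (ρ : Measure X) [IsFiniteMeasure ρ]
    {h : X → ℝ} {c : ℝ} (hm : Measurable h) (hc : ∀ x, |h x| ≤ c) : Integrable h ρ :=
  Integrable.mono' (integrable_const c) hm.aestronglyMeasurable (Eventually.of_forall hc)

lemma sintegral_simple_aux {X : Type*} [MeasurableSpace X] (μ : SignedMeasure X)
    (s : SimpleFunc X ℝ) : sintegral μ s = ∑ y ∈ s.range, μ (s ⁻¹' {y}) * y := by
  unfold sintegral
  rw [SimpleFunc.integral_eq_sum _ (SimpleFunc.integrable_of_isFiniteMeasure s),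
    SimpleFunc.integral_eq_sum _ (SimpleFunc.integrable_of_isFiniteMeasure s),
    ← Finset.sum_sub_distrib]
  refine Finset.sum_congr rfl fun y _ => ?_
  rw [μ.apply_eq_posPart_real_sub_negPart_real (s.measurableSet_fiber y), smul_eq_mul,
    smul_eq_mul, sub_mul]

lemma sintegral_sum_aux {X ι : Type*} [MeasurableSpace X] (μ : SignedMeasure X) (S : Finset ι)
    (h : ι → X → ℝ) (a : ι → ℝ) {c : ℝ} (hm : ∀ i, Measurable (h i)) (hc : ∀ i x, |h i x| ≤ c) :
    sintegral μ (fun x => ∑ i ∈ S, h i x * a i) = ∑ i ∈ S, sintegral μ (h i) * a i := by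
  unfold sintegral
  rw [integral_finsetSum _ fun i _ => (integrable_bdd_aux _ (hm i) (hc i)).mul_const _,
    integral_finsetSum _ fun i _ => (integrable_bdd_aux _ (hm i) (hc i)).mul_const _,
    ← Finset.sum_sub_distrib]
  refine Finset.sum_congr rfl fun y _ => ?_
  rw [integral_mul_const, integral_mul_const, sub_mul]

lemma sintegral_congr_aux {X : Type*} [MeasurableSpace X] (μ : SignedMeasure X) {C : Set X}
    (hC : MeasurableSet C) (h0 : ∀ E, MeasurableSet E → E ⊆ Cᶜ → μ E = 0) {f g : X → ℝ}
    (hfg : ∀ x ∈ C, f x = g x) : sintegral μ f = sintegral μ g := by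
  obtain ⟨i, hi₁, hi₂, hi₃, hpos, hneg⟩ := μ.toJordanDecomposition_spec
  have h1 : μ.toJordanDecomposition.posPart Cᶜ = 0 := by
    rw [hpos, SignedMeasure.toMeasureOfZeroLE_apply _ _ _ hC.compl]
    simp [h0 _ (hi₁.inter hC.compl) Set.inter_subset_right]
  have h2 : μ.toJordanDecomposition.negPart Cᶜ = 0 := by
    rw [hneg, SignedMeasure.toMeasureOfLEZero_apply _ _ _ hC.compl]
    simp [h0 _ (hi₁.compl.inter hC.compl) Set.inter_subset_right]
  unfold sintegral
  congr 1
  · refine integral_congr_ae ?_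
    filter_upwards [compl_mem_ae_iff.2 h1] with x hx using hfg x (by simpa using hx)
  · refine integral_congr_ae ?_
    filter_upwards [compl_mem_ae_iff.2 h2] with x hx using hfg x (by simpa using hx)

/-- With `m t` all supported by `B` with `‖m t‖ ≤ γ`, `f` measurable with
`|f| ≤ β` on `B`, and `κ` the signed measure `E ↦ ∫_T (m t)(E) d𝕄(t)`, the function
`t ↦ ∫ f d(m t)` is measurable and `𝕄`-integrable, and
`∫_T (∫_X f d(m t)) d𝕄(t) = ∫_X f dκ`. -/
theorem stmt9 {T X : Type*} [MeasurableSpace T] [MeasurableSpace X]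
    (𝕄 : SignedMeasure T) (m : T → SignedMeasure X)
    (hmeas : ∀ E : Set X, MeasurableSet E → Measurable fun t => m t E)
    (B : Set X) (γ β : ℝ) (hγ : 0 < γ) (hβ : 0 < β)
    (hsupp : ∀ t, ∃ ν : SignedMeasure B, m t = ν.map (Subtype.val : B → X))
    (hbound : ∀ t, tvNorm (m t) ≤ γ)
    (f : X → ℝ) (hf : Measurable f) (hfB : ∀ x ∈ B, |f x| ≤ β)
    (κ : SignedMeasure X)
    (hκ : ∀ E : Set X, MeasurableSet E → κ E = sintegral 𝕄 fun t => m t E) :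
    Measurable (fun t => sintegral (m t) f) ∧
    SIntegrable 𝕄 (fun t => sintegral (m t) f) ∧
    sintegral 𝕄 (fun t => sintegral (m t) f) = sintegral κ f := by
  set C : Set X := {x | |f x| ≤ β} with hCdef
  have hC : MeasurableSet C := measurableSet_le hf.abs measurable_const
  have hm0 : ∀ t E, MeasurableSet E → E ⊆ Cᶜ → m t E = 0 := by
    intro t E hE hEC
    obtain ⟨ν, hν⟩ := hsupp t
    rw [hν, VectorMeasure.map_apply _ measurable_subtype_coe hE]
    have : (Subtype.val : B → X) ⁻¹' E = ∅ := by
      ext x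
      simp only [Set.mem_preimage, Set.mem_empty_iff_false, iff_false]
      exact fun hx => hEC hx (hfB x x.2)
    rw [this, VectorMeasure.empty]
  have hκ0 : ∀ E, MeasurableSet E → E ⊆ Cᶜ → κ E = 0 := by
    intro E hE hEC
    rw [hκ E hE]
    simp [hm0 _ E hE hEC, sintegral]
  set g : X → ℝ := C.indicator f with hg
  have hgm : Measurable g := hf.indicator hC
  have hgb : ∀ x, |g x| ≤ β := by
    intro x
    by_cases hx : x ∈ C
    · rw [hg, Set.indicator_of_mem hx]; exact hx
    · simpa [hg, Set.indicator_of_notMem hx] using hβ.le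
  have hfg : ∀ x ∈ C, f x = g x := fun x hx => by simp [hg, Set.indicator_of_mem hx]
  have e1 : (fun t => sintegral (m t) f) = fun t => sintegral (m t) g :=
    funext fun t => sintegral_congr_aux (m t) hC (hm0 t) hfg
  rw [e1, sintegral_congr_aux κ hC hκ0 hfg]
  have hgs := hgm.stronglyMeasurable
  let s : ℕ → SimpleFunc X ℝ := fun n => hgs.approxBounded β n
  have hsb : ∀ n x, |s n x| ≤ β := fun n x => hgs.norm_approxBounded_le hβ.le n x
  have hsl : ∀ x, Tendsto (fun n => s n x) atTop (𝓝 (g x)) := fun x =>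
    hgs.tendsto_approxBounded_of_norm_le (hgb x)
  have hlim : ∀ μ : SignedMeasure X,
      Tendsto (fun n => sintegral μ (s n)) atTop (𝓝 (sintegral μ g)) := fun μ =>
    tendsto_sintegral_aux μ (fun n => (s n).measurable) hsb hsl
  have hsm : ∀ n, Measurable fun t => sintegral (m t) (s n) := by
    intro n
    simp only [sintegral_simple_aux]
    exact Finset.measurable_fun_sum _ fun y _ =>
      (hmeas _ ((s n).measurableSet_fiber y)).mul_const _
  have hM : Measurable fun t => sintegral (m t) g :=
    measurable_of_tendsto_metrizable hsm (tendsto_pi_nhds.2 fun t => hlim (m t))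
  have hbd : ∀ h : X → ℝ, (∀ x, |h x| ≤ β) → ∀ t, |sintegral (m t) h| ≤ β * γ := fun h hh t =>
    (abs_sintegral_le_aux (m t) hh).trans (mul_le_mul_of_nonneg_left (hbound t) hβ.le)
  refine ⟨hM, integrable_bdd_aux _ hM (hbd g hgb), ?_⟩
  have hL : Tendsto (fun n => sintegral 𝕄 fun t => sintegral (m t) (s n)) atTop
      (𝓝 (sintegral 𝕄 fun t => sintegral (m t) g)) :=
    tendsto_sintegral_aux 𝕄 hsm (fun n => hbd _ (hsb n)) fun t => hlim (m t)
  refine tendsto_nhds_unique hL ((hlim κ).congr fun n => ?_)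
  simp only [sintegral_simple_aux]
  rw [sintegral_sum_aux 𝕄 (s n).range (fun y t => m t (s n ⁻¹' {y})) (fun y => y) (c := γ)
    (fun y => hmeas _ ((s n).measurableSet_fiber y))
    (fun y t => (abs_apply_le_aux (m t) ((s n).measurableSet_fiber y)).trans (hbound t))]
  exact Finset.sum_congr rfl fun y _ => by rw [hκ _ ((s n).measurableSet_fiber y)]
end

section
/- Let T and X be measurable spaces, 𝕄 a finite signed measure on T, and m : T → (finite signed measures on X) a family such that for every measurable E ⊆ X the map t ↦ (m t)(E) is measurable and there is γ > 0 with ‖m t‖ ≤ γ for all t. Suppose there is a subset B ⊆ X such that each m t is supported by B. Then the finite signed measure κ on X defined by κ(E) = ∫_T (m t)(E) d𝕄(t) is itself supported by B, i.e. κ is the pushforward along the inclusion B → X of a finite signed measure on B. -/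
open MeasureTheory

open Classical in
theorem exists_map_of_null {X : Type*} [MeasurableSpace X] (κ : SignedMeasure X) (B : Set X)
    (h0 : ∀ E : Set X, MeasurableSet E → (Subtype.val : B → X) ⁻¹' E = ∅ → κ E = 0) :
    ∃ ν : SignedMeasure B, κ = ν.map (Subtype.val : B → X) := by
  have hwd : ∀ E F : Set X, MeasurableSet E → MeasurableSet F →
      (Subtype.val : B → X) ⁻¹' E = (Subtype.val : B → X) ⁻¹' F → κ E = κ F := by
    have key : ∀ E F : Set X, MeasurableSet E → MeasurableSet F →
      (Subtype.val : B → X) ⁻¹' E = (Subtype.val : B → X) ⁻¹' F → κ E = κ (E ∩ F) := by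
      intro E F hE hF h
      have h1 : κ (E \ F) = 0 := h0 _ (hE.diff hF) (by rw [Set.preimage_diff, h, Set.diff_self])
      have h2 := VectorMeasure.of_union (v := κ) (A := E ∩ F) (B := E \ F)
        (Set.disjoint_sdiff_inter.symm) (hE.inter hF) (hE.diff hF)
      rw [Set.inter_union_diff, h1, add_zero] at h2
      exact h2
    intro E F hE hF h
    rw [key E F hE hF h, key F E hF hE h.symm, Set.inter_comm]
  have hex : ∀ A : Set B, ∃ E : Set X, MeasurableSet A →
      MeasurableSet E ∧ (Subtype.val : B → X) ⁻¹' E = A := by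
    intro A
    by_cases hA : MeasurableSet A
    · obtain ⟨E, hE, h⟩ := hA
      exact ⟨E, fun _ => ⟨hE, h⟩⟩
    · exact ⟨∅, fun h => absurd h hA⟩
  choose e he using hex
  have hval : ∀ E : Set X, MeasurableSet E → κ (e ((Subtype.val : B → X) ⁻¹' E)) = κ E := by
    intro E hE
    have := he _ (measurable_subtype_coe hE)
    exact hwd _ _ this.1 hE this.2
  let ν : SignedMeasure B :=
    { measureOf' := fun A => if MeasurableSet A then κ (e A) else 0
      empty' := by
        have := he ∅ MeasurableSet.empty
        simp only [MeasurableSet.empty, if_true]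
        exact h0 _ this.1 this.2
      not_measurable' := fun A hA => by simp [hA]
      m_iUnion' := by
        intro f hf hd
        have hs := VectorMeasure.hasSum_of_disjoint_iUnion (v := κ)
          (f := disjointed fun i => e (f i))
          (fun i => MeasurableSet.disjointed (fun i => (he _ (hf i)).1) i)
          (disjoint_disjointed _)
        have hp : ∀ i, (Subtype.val : B → X) ⁻¹' (disjointed (fun i => e (f i)) i) = f i := by
          intro i
          apply Set.Subset.antisymm
          · exact (Set.preimage_mono (disjointed_subset _ i)).trans (he _ (hf i)).2.subset
          · intro x hx
            rw [Set.mem_preimage, disjointed_eq_inter_compl]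
            refine ⟨?_, ?_⟩
            · have : x ∈ (Subtype.val : B → X) ⁻¹' e (f i) := by rw [(he _ (hf i)).2]; exact hx
              exact this
            · simp only [Set.mem_iInter]
              intro j hj hxj
              have : x ∈ (Subtype.val : B → X) ⁻¹' e (f j) := hxj
              rw [(he _ (hf j)).2] at this
              exact Set.disjoint_left.1 (hd hj.ne) this hx
        have hm : ∀ i, MeasurableSet (disjointed (fun i => e (f i)) i) :=
          fun i => MeasurableSet.disjointed (fun i => (he _ (hf i)).1) i
        have h1 : ∀ i, κ (disjointed (fun i => e (f i)) i) = κ (e (f i)) := by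
          intro i
          exact hwd _ _ (hm i) (he _ (hf i)).1 ((hp i).trans (he _ (hf i)).2.symm)
        have hU := he _ (MeasurableSet.iUnion hf)
        have h2 : κ (⋃ i, disjointed (fun i => e (f i)) i) = κ (e (⋃ i, f i)) := by
          refine hwd _ _ (MeasurableSet.iUnion hm) hU.1 ?_
          rw [hU.2, Set.preimage_iUnion]
          simp only [hp]
        rw [h2] at hs
        simp only [h1] at hs
        simpa only [hf, MeasurableSet.iUnion hf, if_true] using hs }
  refine ⟨ν, VectorMeasure.ext fun E hE => ?_⟩
  rw [VectorMeasure.map_apply _ measurable_subtype_coe hE]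
  change κ E = if MeasurableSet ((Subtype.val : B → X) ⁻¹' E) then
    κ (e ((Subtype.val : B → X) ⁻¹' E)) else 0
  rw [if_pos (measurable_subtype_coe hE), hval E hE]

/-- With `m t` all supported by `B ⊆ X` and `‖m t‖ ≤ γ` uniformly, the signed
measure `κ` defined by `κ(E) = ∫_T (m t)(E) d𝕄(t)` is itself supported by `B`, i.e. it is
the pushforward along the inclusion `B → X` of a finite signed measure on `B`. -/
theorem stmt11 {T X : Type*} [MeasurableSpace T] [MeasurableSpace X]
    (𝕄 : SignedMeasure T) (m : T → SignedMeasure X)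
    (hmeas : ∀ E : Set X, MeasurableSet E → Measurable fun t => m t E)
    (γ : ℝ) (hγ : 0 < γ) (hbound : ∀ t, tvNorm (m t) ≤ γ)
    (B : Set X) (hsupp : ∀ t, ∃ ν : SignedMeasure B, m t = ν.map (Subtype.val : B → X))
    (κ : SignedMeasure X)
    (hκ : ∀ E : Set X, MeasurableSet E → κ E = sintegral 𝕄 fun t => m t E) :
    ∃ ν : SignedMeasure B, κ = ν.map (Subtype.val : B → X) := by
  refine exists_map_of_null κ B fun E hE h => ?_
  have hz : (fun t => m t E) = fun _ => (0 : ℝ) := by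
    funext t
    obtain ⟨ν, hν⟩ := hsupp t
    rw [hν, VectorMeasure.map_apply _ measurable_subtype_coe hE, h, VectorMeasure.empty]
  rw [hκ E hE, hz]
  simp [sintegral]
end
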